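/- Let A ⊆ B be an inclusion of C*-algebras. Then the following are equivalent: (i) every nonzero positive element of A is full and properly infinite in B; (ii) for every nonzero positive element a ∈ A, the hereditary C*-subalgebra cl(aBa), the norm closure of {a·b·a : b ∈ B}, contains a projection that is full and properly infinite in B. -/

import Mathlib

open Filter Topology

section Defs

variable {B : Type*} [NonUnitalNormedRing B] [StarRing B] [PartialOrder B]

/-- A projection in a C*-algebra: a self-adjoint idempotent. -/
def IsProjection (p : B) : Prop := star p = p ∧ p * p = p

/-- The hereditary subalgebra `cl(a·S·a)`: the norm closure of `{a * b * a : b ∈ S}`. -/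
def herSub (S : Set B) (a : B) : Set B := closure {x : B | ∃ b ∈ S, x = a * b * a}

/-- `T` has an approximate unit of projections. -/
def HasApproxUnitOfProjections (T : Set B) : Prop :=
  ∀ x ∈ T, 0 ≤ x → ∀ ε : ℝ, 0 < ε → ∃ p ∈ T, IsProjection p ∧ ‖p * x - x‖ < ε

/-- The inclusion `A ⊆ S` of C*-algebras has real rank zero. -/
def InclusionRealRankZero (A S : Set B) : Prop :=
  ∀ a ∈ A, 0 ≤ a → a ≠ 0 → HasApproxUnitOfProjections (herSub S a)

end Defs

section Infinite

variable {B : Type*} [NonUnitalCStarAlgebra B] [PartialOrder B] [StarOrderedRing B]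

/-- An element `b` of a C*-algebra `B` is full if the closed two-sided ideal of `B`
generated by `b` is all of `B`. -/
def IsFullIn (b : B) : Prop :=
  ∀ J : TwoSidedIdeal B, IsClosed (J : Set B) → b ∈ J → ∀ x : B, x ∈ J

/-- Cuntz subequivalence: `a ≾ b` if `a = lim xₙ * b * xₙ*`. -/
def CuntzSubequiv {R : Type*} [NonUnitalRing R] [StarRing R] [TopologicalSpace R]
    (a b : R) : Prop :=
  ∃ x : ℕ → R, Tendsto (fun n => x n * b * star (x n)) atTop (nhds a)

/-- A nonzero positive element `b` of a C*-algebra is properly infinite if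
`diag(b, b) ≾ diag(b, 0)` in `M₂(B)`. -/
def ProperlyInfinite (b : B) : Prop :=
  b ≠ 0 ∧ 0 ≤ b ∧
    CuntzSubequiv (R := Matrix (Fin 2) (Fin 2) B)
      (Matrix.diagonal ![b, b]) (Matrix.diagonal ![b, 0])

end Infinite

/-!
If `b` is properly infinite, then `{x | x x* ≾ b}` is a closed two-sided ideal, so a `b` that is
also full dominates every positive element of `B`. Hence fullness together with proper infiniteness
passes upwards along `≾`. A projection in `cl(aBa)` is Cuntz below `a`, which gives (ii) ⇒ (i).

For (i) ⇒ (ii), cut `a` off at three increasing levels to get `l`, `f`, `s`, each a unit for the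
next. As `s²` is full and properly infinite, it contains two almost orthogonal copies of `l`:
elements `x`, `y` with `f x = x`, `f y = y`, `x* x ≈ l ≈ y* y` and `y* x ≈ 0`. In the unitization,
put `v = 1 - f + x f`. Since `‖f - f²‖ ≤ 1/4`, the element `v* v` is invertible, and the projection
`p` onto the complement of the range of `v` lies under `l`, hence in `cl(aBa)`. That complement
almost contains `y`, so `y* p y ≈ l` and `s² ≾ p`.
-/

section CuntzComparison

variable {R : Type*} [NonUnitalRing R] [StarRing R] [TopologicalSpace R]

theorem cuntzSubequiv_conj (x b : R) : CuntzSubequiv (x * b * star x) b :=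
  ⟨fun _ => x, tendsto_const_nhds⟩

theorem CuntzSubequiv.smul [Module ℝ R] [IsScalarTower ℝ R R] [SMulCommClass ℝ R R]
    [StarModule ℝ R] [ContinuousConstSMul ℝ R] {a b : R} (h : CuntzSubequiv a b) {r : ℝ}
    (hr : 0 ≤ r) : CuntzSubequiv (r • a) b := by
  obtain ⟨x, hx⟩ := h
  refine ⟨fun n => √r • x n, ?_⟩
  simpa [smul_mul_assoc, mul_smul_comm, smul_smul, Real.mul_self_sqrt hr] using hx.const_smul r

theorem CuntzSubequiv.diagonal {n : Type*} [Fintype n] [DecidableEq n] {d e : n → R}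
    (h : ∀ i, CuntzSubequiv (d i) (e i)) :
    CuntzSubequiv (Matrix.diagonal d) (Matrix.diagonal e) := by
  choose x hx using h
  refine ⟨fun k => Matrix.diagonal fun i => x i k, ?_⟩
  have hlim := (continuous_id.matrix_diagonal (n := n)).tendsto d |>.comp (tendsto_pi_nhds.2 hx)
  simpa [Function.comp_def, Matrix.star_eq_conjTranspose, Matrix.diagonal_conjTranspose] using hlim

theorem CuntzSubequiv.exists_tendsto_of_diagonal {a c b : R}
    (h : CuntzSubequiv (Matrix.diagonal ![a, c]) (Matrix.diagonal ![b, 0])) :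
    ∃ u w : ℕ → R, Tendsto (fun n => u n * b * star (u n)) atTop (𝓝 a) ∧
      Tendsto (fun n => w n * b * star (w n)) atTop (𝓝 c) ∧
      Tendsto (fun n => u n * b * star (w n)) atTop (𝓝 0) ∧
      Tendsto (fun n => w n * b * star (u n)) atTop (𝓝 0) := by
  obtain ⟨X, hX⟩ := h
  have entry (Y : Matrix (Fin 2) (Fin 2) R) (i j : Fin 2) :
      (Y * Matrix.diagonal ![b, 0] * star Y) i j = Y i 0 * b * star (Y j 0) := by
    simp [Matrix.mul_apply, Matrix.diagonal_apply]
  have lim (i j : Fin 2) := tendsto_pi_nhds.1 (tendsto_pi_nhds.1 hX i) j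
  simp only [entry] at lim
  exact ⟨fun n => X n 0 0, fun n => X n 1 0, lim 0 0, lim 1 1, lim 0 1, lim 1 0⟩

theorem CuntzSubequiv.add_of_diagonal [ContinuousAdd R] {a c b : R}
    (h : CuntzSubequiv (Matrix.diagonal ![a, c]) (Matrix.diagonal ![b, 0])) :
    CuntzSubequiv (a + c) b := by
  obtain ⟨u, w, hu, hw, huw, hwu⟩ := h.exists_tendsto_of_diagonal
  refine ⟨fun n => u n + w n, ?_⟩
  convert (hu.add hw).add (huw.add hwu) using 2
  · simp only [star_add, add_mul, mul_add]
    abel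
  · simp

variable [FrechetUrysohnSpace R]

theorem cuntzSubequiv_iff_mem_closure {a b : R} :
    CuntzSubequiv a b ↔ a ∈ closure (Set.range fun x : R => x * b * star x) := by
  rw [mem_closure_iff_seq_limit]
  constructor
  · rintro ⟨x, hx⟩
    exact ⟨_, fun n => ⟨x n, rfl⟩, hx⟩
  · rintro ⟨y, hy, hlim⟩
    choose x hx using hy
    exact ⟨x, by simpa only [hx] using hlim⟩

theorem isClosed_setOf_cuntzSubequiv (b : R) : IsClosed {a | CuntzSubequiv a b} := by
  simpa only [cuntzSubequiv_iff_mem_closure, Set.ofPred_mem_eq] using isClosed_closure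

theorem CuntzSubequiv.trans [ContinuousMul R] {a b c : R} (hab : CuntzSubequiv a b)
    (hbc : CuntzSubequiv b c) : CuntzSubequiv a c := by
  obtain ⟨x, hx⟩ := hab
  refine (isClosed_setOf_cuntzSubequiv c).mem_of_tendsto hx (.of_forall fun n => ?_)
  obtain ⟨y, hy⟩ := hbc
  refine ⟨fun k => x n * y k, ?_⟩
  simpa only [star_mul, mul_assoc] using (hy.const_mul (x n)).mul_const (star (x n))

end CuntzComparison

section Order

open scoped CStarAlgebra

theorem add_mul_star_add_le {R : Type*} [NonUnitalRing R] [PartialOrder R] [StarRing R]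
    [StarOrderedRing R] (x y : R) :
    (x + y) * star (x + y) ≤ 2 • (x * star x + y * star y) := by
  rw [← sub_nonneg]
  convert mul_star_self_nonneg (x - y) using 1
  simp only [two_nsmul, star_add, star_sub, add_mul, mul_add, sub_mul, mul_sub]
  abel

theorem exists_inr_eq_of_fst_eq_zero {R A : Type*} [Zero R] {x : Unitization R A}
    (hx : x.fst = 0) : ∃ y : A, (y : Unitization R A) = x :=
  ⟨x.snd, Unitization.ext hx.symm rfl⟩

variable {B : Type*} [NonUnitalCStarAlgebra B] [PartialOrder B] [StarOrderedRing B]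

-- With `c = b + ε` in the unitization, the witness is `w = a^{1/2} c^{-1/2}`: it is a contraction
-- because `a ≤ c`, and `w c w* = a`, so that `a - w b w* = ε w w*`.
theorem exists_norm_sub_conj_le {a b : B} (ha : 0 ≤ a) (hab : a ≤ b) {ε : ℝ} (hε : 0 < ε) :
    ∃ w : B, ‖a - w * b * star w‖ ≤ ε := by
  set c : B⁺¹ := b + algebraMap ℝ B⁺¹ ε with hc_def
  have hεU : IsStrictlyPositive (algebraMap ℝ B⁺¹ ε) := isStrictlyPositive_algebraMap hε
  have hc : IsStrictlyPositive c := hεU.nonneg_add (Unitization.inr_nonneg_iff.2 (ha.trans hab))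
  have haU : (0 : B⁺¹) ≤ a := Unitization.inr_nonneg_iff.2 ha
  have hac : (a : B⁺¹) ≤ c :=
    ((Unitization.inr_le_iff a b (.of_nonneg ha) (.of_nonneg (ha.trans hab))).2 hab).trans
      (le_add_of_nonneg_right hεU.nonneg)
  set s : B := CFC.sqrt a
  set k : B⁺¹ := c ^ (-(1 / 2) : ℝ)
  have hk : star k = k := (IsSelfAdjoint.of_nonneg CFC.rpow_nonneg).star_eq
  have hs : star s = s := (IsSelfAdjoint.of_nonneg (CFC.sqrt_nonneg a)).star_eq
  obtain ⟨w, hw⟩ : ∃ w : B, (w : B⁺¹) = s * k := exists_inr_eq_of_fst_eq_zero (by simp)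
  have hw1 : ‖w‖ ≤ 1 := by
    rw [← Unitization.norm_inr (𝕜 := ℂ), hw, ← Unitization.sqrt_inr]
    exact (le_iff_norm_sqrt_mul_rpow _ _).1 hac
  have hwc : (w : B⁺¹) * c * star (w : B⁺¹) = a := by
    calc (w : B⁺¹) * c * star (w : B⁺¹) = s * (k * c * k) * s := by
          rw [hw, star_mul, hk, ← Unitization.inr_star, hs]
          simp only [mul_assoc]
      _ = a := by
          rw [CFC.conjugate_rpow_neg_one_half c, mul_one, ← Unitization.inr_mul,
            CFC.sqrt_mul_sqrt_self a]
  have hdiff : a - w * b * star w = ε • (w * star w) := by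
    apply Unitization.inr_injective (R := ℂ)
    rw [Unitization.inr_sub, ← hwc]
    simp [hc_def, mul_add, add_mul, Algebra.algebraMap_eq_smul_one]
  refine ⟨w, ?_⟩
  rw [hdiff, norm_smul, Real.norm_of_nonneg hε.le, CStarRing.norm_self_mul_star]
  exact mul_le_of_le_one_right hε.le (mul_le_one₀ hw1 (norm_nonneg w) hw1)

theorem CuntzSubequiv.of_le {a b : B} (ha : 0 ≤ a) (hab : a ≤ b) : CuntzSubequiv a b := by
  refine cuntzSubequiv_iff_mem_closure.2 (Metric.mem_closure_iff.2 fun ε hε => ?_)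
  obtain ⟨w, hw⟩ := exists_norm_sub_conj_le ha hab (half_pos hε)
  exact ⟨_, ⟨w, rfl⟩, by rw [dist_eq_norm]; linarith⟩

theorem mul_star_self_cuntzSubequiv_of_mem_herSub {a x : B} (ha : 0 ≤ a)
    (hx : x ∈ herSub Set.univ a) : CuntzSubequiv (x * star x) a := by
  refine closure_minimal (t := {x | CuntzSubequiv (x * star x) a}) ?_
    ((isClosed_setOf_cuntzSubequiv a).preimage (by fun_prop)) hx
  rintro _ ⟨b, -, rfl⟩
  set s : B := CFC.sqrt a
  have hs : star s = s := (IsSelfAdjoint.of_nonneg (CFC.sqrt_nonneg a)).star_eq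
  have hss : s * s = a := CFC.sqrt_mul_sqrt_self a
  change CuntzSubequiv (a * b * a * star (a * b * a)) a
  convert cuntzSubequiv_conj (a * b * s) a using 1
  simp only [← hss, star_mul, hs, mul_assoc]

-- If `l` is a unit for `s`, then `‖l - x‖ < 1` forces `s x s ≥ (1 - ‖l - x‖) s²`.
theorem mul_self_cuntzSubequiv_of_norm_sub_lt_one {s l x : B} (hs : IsSelfAdjoint s)
    (hx : IsSelfAdjoint x) (hl : IsSelfAdjoint l) (hls : l * s = s) (hlx : ‖l - x‖ < 1) :
    CuntzSubequiv (s * s) x := by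
  set r : ℝ := 1 - ‖l - x‖ with hr_def
  have hr : 0 < r := sub_pos.2 hlx
  have hle : r • (s * s) ≤ s * x * s := by
    have h := CStarAlgebra.star_left_conjugate_le_norm_smul (a := s) (hl.sub hx)
    rw [hs.star_eq, mul_sub, sub_mul, mul_assoc s l s, hls, sub_le_comm] at h
    rwa [hr_def, sub_smul, one_smul]
  have hsub : CuntzSubequiv (r • (s * s)) x :=
    (CuntzSubequiv.of_le (smul_nonneg hr.le hs.mul_self_nonneg) hle).trans
      (by simpa only [hs.star_eq] using cuntzSubequiv_conj s x)
  simpa only [inv_smul_smul₀ hr.ne'] using hsub.smul (inv_nonneg.2 hr.le)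

end Order

section ProperlyInfinite

instance {m n α : Type*} [Countable m] [Countable n] [TopologicalSpace α]
    [FirstCountableTopology α] : FirstCountableTopology (Matrix m n α) :=
  inferInstanceAs (FirstCountableTopology (m → n → α))

variable {B : Type*} [NonUnitalCStarAlgebra B]

theorem IsFullIn.of_cuntzSubequiv {a b : B} (hb : IsFullIn b) (hba : CuntzSubequiv b a) :
    IsFullIn a := by
  refine fun J hJ haJ => hb J hJ ?_
  obtain ⟨x, hx⟩ := hba
  exact hJ.mem_of_tendsto hx (.of_forall fun n => J.mul_mem_right _ _ (J.mul_mem_left _ _ haJ))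

variable [PartialOrder B]

theorem ProperlyInfinite.diagonal_cuntzSubequiv {a b c : B} (hb : ProperlyInfinite b)
    (ha : CuntzSubequiv a b) (hc : CuntzSubequiv c b) :
    CuntzSubequiv (Matrix.diagonal ![a, c]) (Matrix.diagonal ![b, 0]) :=
  (CuntzSubequiv.diagonal (Fin.forall_fin_two.2 ⟨ha, hc⟩)).trans hb.2.2

theorem ProperlyInfinite.add_cuntzSubequiv {a b c : B} (hb : ProperlyInfinite b)
    (ha : CuntzSubequiv a b) (hc : CuntzSubequiv c b) : CuntzSubequiv (a + c) b :=
  (hb.diagonal_cuntzSubequiv ha hc).add_of_diagonal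

variable [StarOrderedRing B]

/-- The closed two-sided ideal `{x | x x* ≾ b}` attached to a properly infinite element `b`. Proper
infiniteness is what makes it closed under addition. -/
def ProperlyInfinite.cuntzIdeal {b : B} (hb : ProperlyInfinite b) : TwoSidedIdeal B :=
  .mk' {x | CuntzSubequiv (x * star x) b}
    (by simpa using cuntzSubequiv_conj 0 b)
    (fun {x y} hx hy => (CuntzSubequiv.of_le (mul_star_self_nonneg _)
      (add_mul_star_add_le x y)).trans <| by
        rw [two_nsmul]
        exact hb.add_cuntzSubequiv (hb.add_cuntzSubequiv hx hy) (hb.add_cuntzSubequiv hx hy))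
    (fun {x} hx => by simpa using hx)
    (fun {x y} hy => by
      simpa only [Set.mem_ofPred_eq, star_mul, mul_assoc] using
        (cuntzSubequiv_conj x (y * star y)).trans hy)
    (fun {x y} hx => by
      have hle : x * y * star (x * y) ≤ ‖y * star y‖ • (x * star x) := by
        simpa only [star_mul, mul_assoc] using
          CStarAlgebra.star_right_conjugate_le_norm_smul (a := x) (IsSelfAdjoint.mul_star_self y)
      exact (CuntzSubequiv.of_le (mul_star_self_nonneg _) hle).trans
        (CuntzSubequiv.smul hx (norm_nonneg _)))

theorem ProperlyInfinite.mem_cuntzIdeal {b x : B} (hb : ProperlyInfinite b) :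
    x ∈ hb.cuntzIdeal ↔ CuntzSubequiv (x * star x) b :=
  TwoSidedIdeal.mem_mk' ..

theorem ProperlyInfinite.isClosed_cuntzIdeal {b : B} (hb : ProperlyInfinite b) :
    IsClosed (hb.cuntzIdeal : Set B) := by
  convert (isClosed_setOf_cuntzSubequiv b).preimage (f := fun x => x * star x) (by fun_prop)
  ext x
  exact hb.mem_cuntzIdeal

theorem ProperlyInfinite.self_mem_cuntzIdeal {b : B} (hb : ProperlyInfinite b) :
    b ∈ hb.cuntzIdeal := by
  rw [hb.mem_cuntzIdeal]
  set s : B := CFC.sqrt b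
  have hs : star s = s := (IsSelfAdjoint.of_nonneg (CFC.sqrt_nonneg b)).star_eq
  have hss : s * s = b := CFC.sqrt_mul_sqrt_self b hb.2.1
  convert cuntzSubequiv_conj s b using 1
  simp only [← hss, star_mul, hs, mul_assoc]

theorem ProperlyInfinite.cuntzSubequiv_of_isFullIn {a b : B} (hb : ProperlyInfinite b)
    (hfull : IsFullIn b) (ha : 0 ≤ a) : CuntzSubequiv a b := by
  have hmem := hb.mem_cuntzIdeal.1
    (hfull _ hb.isClosed_cuntzIdeal hb.self_mem_cuntzIdeal (CFC.sqrt a))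
  rwa [(IsSelfAdjoint.of_nonneg (CFC.sqrt_nonneg a)).star_eq, CFC.sqrt_mul_sqrt_self a] at hmem

theorem ProperlyInfinite.of_cuntzSubequiv {a b : B} (hb : ProperlyInfinite b)
    (hfull : IsFullIn b) (ha : 0 ≤ a) (hba : CuntzSubequiv b a) : ProperlyInfinite a := by
  refine ⟨?_, ha, ?_⟩
  · rintro rfl
    obtain ⟨x, hx⟩ := hba
    exact hb.1 (tendsto_nhds_unique hx (by simp))
  · have hab := hb.cuntzSubequiv_of_isFullIn hfull ha
    refine (hb.diagonal_cuntzSubequiv hab hab).trans (.diagonal (Fin.forall_fin_two.2 ⟨hba, ?_⟩))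
    simpa using cuntzSubequiv_conj 0 (0 : B)

end ProperlyInfinite

section RangeComplement

/-- The projection `1 - v (v* v)⁻¹ v*` onto the orthogonal complement of the range of `v`, for `v`
bounded below. If `v* v` is not invertible, the junk value of `Ring.inverse` makes it `1`. -/
noncomputable def rangeComplement {R : Type*} [Ring R] [StarRing R] (v : R) : R :=
  1 - v * Ring.inverse (star v * v) * star v

section StarRing

variable {R : Type*} [Ring R] [StarRing R] {v x : R}

theorem isSelfAdjoint_inverse_star_mul_self (v : R) :
    IsSelfAdjoint (Ring.inverse (star v * v)) := by
  rw [IsSelfAdjoint, ← Ring.inverse_star, star_mul, star_star]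

theorem isStarProjection_rangeComplement (hv : IsUnit (star v * v)) :
    IsStarProjection (rangeComplement v) := by
  refine IsStarProjection.one_sub ⟨?_, ?_⟩
  · calc v * Ring.inverse (star v * v) * star v * (v * Ring.inverse (star v * v) * star v)
        = v * (Ring.inverse (star v * v) * (star v * v)) * Ring.inverse (star v * v) * star v := by
          simp only [mul_assoc]
      _ = v * Ring.inverse (star v * v) * star v := by
          rw [Ring.inverse_mul_cancel _ hv, mul_one]
  · exact (isSelfAdjoint_inverse_star_mul_self v).conjugate v

theorem rangeComplement_mul_eq_zero (hv : IsUnit (star v * v)) (hvx : v * x = x)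
    (hvx' : star v * x = x) : rangeComplement v * x = 0 := by
  have hinv : Ring.inverse (star v * v) * x = x := by
    calc Ring.inverse (star v * v) * x = Ring.inverse (star v * v) * (star v * v) * x := by
          rw [mul_assoc, mul_assoc, hvx, hvx']
      _ = x := by rw [Ring.inverse_mul_cancel _ hv, one_mul]
  rw [rangeComplement, sub_mul, mul_assoc, mul_assoc, hvx', hinv, hvx, one_mul, sub_self]

theorem star_mul_rangeComplement_mul (v y : R) :
    star y * rangeComplement v * y =
      star y * y - star y * v * Ring.inverse (star v * v) * star (star y * v) := by
  simp only [rangeComplement, mul_sub, sub_mul, mul_one, star_mul, star_star, mul_assoc]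

end StarRing

theorem norm_inverse_le {R : Type*} [NormedRing R] [NormOneClass R] [HasSummableGeomSeries R]
    {x : R} (hx : ‖1 - x‖ < 1) : ‖Ring.inverse x‖ ≤ (1 - ‖1 - x‖)⁻¹ := by
  have h := tsum_geometric_le_of_norm_lt_one (1 - x) hx
  rw [norm_one, sub_self, zero_add] at h
  rw [← sub_sub_cancel 1 x, NormedRing.inverse_one_sub _ hx, sub_sub_cancel]
  exact h

end RangeComplement

section AlmostIsometry

/-- The element `1 - f + x f`, which is the identity away from `f` and `x` where `f` is `1`. For
`f` and `x` with `f x = x` and `x* x ≈ 1` on `f`, it is bounded below. -/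
def patch {R : Type*} [Ring R] (f x : R) : R := 1 - f + x * f

theorem patch_mul_one_sub {R : Type*} [Ring R] {f l x : R} (hfl : f * l = f) :
    patch f x * (1 - l) = 1 - l := by
  have hf : f * (1 - l) = 0 := by rw [mul_sub, mul_one, hfl, sub_self]
  rw [patch, add_mul, sub_mul, one_mul, mul_assoc, hf, mul_zero, sub_zero, add_zero]

section StarRing

variable {R : Type*} [Ring R] [StarRing R] {f l x y : R}

theorem star_patch (hf : IsSelfAdjoint f) : star (patch f x) = 1 - f + f * star x := by
  simp [patch, hf.star_eq]

theorem star_patch_mul_patch (hf : IsSelfAdjoint f) (hfx : f * x = x) :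
    star (patch f x) * patch f x = (1 - f) * (1 - f) + f * (star x * x) * f := by
  have hx : (1 - f) * x = 0 := by rw [sub_mul, one_mul, hfx, sub_self]
  have hx' : star x * (1 - f) = 0 := by simpa [hf.star_eq] using congrArg star hx
  rw [star_patch hf, patch]
  calc (1 - f + f * star x) * (1 - f + x * f)
      = (1 - f) * (1 - f) + (1 - f) * x * f + f * (star x * (1 - f)) + f * (star x * x) * f := by
        simp only [mul_add, add_mul, mul_assoc]
        abel
    _ = (1 - f) * (1 - f) + f * (star x * x) * f := by rw [hx, hx', zero_mul, mul_zero]; abel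

theorem star_mul_patch (hf : IsSelfAdjoint f) (hfy : f * y = y) :
    star y * patch f x = star y * x * f := by
  have hy : star y * f = star y := by simpa [hf.star_eq] using congrArg star hfy
  rw [patch, mul_add, mul_sub, mul_one, hy, sub_self, zero_add, mul_assoc]

theorem star_patch_mul_one_sub (hf : IsSelfAdjoint f) (hfl : f * l = f) (hfx : f * x = x) :
    star (patch f x) * (1 - l) = 1 - l := by
  have hf0 : f * (1 - l) = 0 := by rw [mul_sub, mul_one, hfl, sub_self]
  have hx : star x = star x * f := by simpa [hf.star_eq] using (congrArg star hfx).symm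
  rw [star_patch hf, add_mul, sub_mul, one_mul, hf0, sub_zero, hx]
  rw [mul_assoc, mul_assoc, hf0, mul_zero, mul_zero, add_zero]

end StarRing

variable {U : Type*} [CStarAlgebra U] {f l x y : U}

theorem norm_one_sub_star_patch_mul_patch_le (hf : IsSelfAdjoint f) (hf1 : ‖f‖ ≤ 1)
    (hfl : f * l = f) (hfx : f * x = x) :
    ‖1 - star (patch f x) * patch f x‖ ≤ 2 * ‖f - f * f‖ + ‖star x * x - l‖ := by
  have hdecomp : 1 - star (patch f x) * patch f x =
      (f - f * f) + (f - f * f) - f * (star x * x - l) * f := by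
    have hflf : f * (star x * x - l) * f = f * (star x * x) * f - f * f := by
      rw [mul_sub, sub_mul, hfl]
    rw [star_patch_mul_patch hf hfx, hflf]
    simp only [mul_sub, sub_mul, mul_one, one_mul]
    abel
  have hconj : ‖f * (star x * x - l) * f‖ ≤ ‖star x * x - l‖ := by
    calc ‖f * (star x * x - l) * f‖ ≤ ‖f‖ * ‖star x * x - l‖ * ‖f‖ := norm_mul₃_le
      _ ≤ 1 * ‖star x * x - l‖ * 1 := by gcongr
      _ = ‖star x * x - l‖ := by ring
  rw [hdecomp]
  linarith [norm_sub_le ((f - f * f) + (f - f * f)) (f * (star x * x - l) * f),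
    norm_add_le (f - f * f) (f - f * f)]

-- The complement of the range of `patch f x` almost contains `y`, because `x* y ≈ 0`.
theorem exists_isStarProjection_mul_eq_norm_sub_le [Nontrivial U] (hf : IsSelfAdjoint f)
    (hf1 : ‖f‖ ≤ 1) (hff : ‖f - f * f‖ ≤ 1 / 4) (hfl : f * l = f) (hfx : f * x = x)
    (hfy : f * y = y) (hxl : ‖star x * x - l‖ ≤ 1 / 4) (hyl : ‖star y * y - l‖ ≤ 1 / 4)
    (hyx : ‖star y * x‖ ≤ 1 / 4) :
    ∃ P : U, IsStarProjection P ∧ P * l = P ∧ ‖l - star y * P * y‖ ≤ 1 / 2 := by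
  set v := patch f x
  have hv : ‖1 - star v * v‖ ≤ 3 / 4 := by
    linarith [norm_one_sub_star_patch_mul_patch_le hf hf1 hfl hfx]
  have hunit : IsUnit (star v * v) := by
    simpa using isUnit_one_sub_of_norm_lt_one (show ‖1 - star v * v‖ < 1 by linarith)
  have hinv : ‖Ring.inverse (star v * v)‖ ≤ 4 :=
    (norm_inverse_le (by linarith)).trans (inv_le_of_inv_le₀ (by norm_num) (by linarith))
  have hyv : ‖star y * v‖ ≤ 1 / 4 := by
    rw [star_mul_patch hf hfy]
    exact (norm_mul_le _ _).trans ((mul_le_of_le_one_right (norm_nonneg _) hf1).trans hyx)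
  refine ⟨rangeComplement v, isStarProjection_rangeComplement hunit, ?_, ?_⟩
  · have hker := rangeComplement_mul_eq_zero hunit (patch_mul_one_sub hfl)
      (star_patch_mul_one_sub hf hfl hfx)
    rw [mul_sub, mul_one, sub_eq_zero] at hker
    exact hker.symm
  · have herr : ‖star y * v * Ring.inverse (star v * v) * star (star y * v)‖ ≤ 1 / 4 := by
      calc _ ≤ ‖star y * v‖ * ‖Ring.inverse (star v * v)‖ * ‖star (star y * v)‖ := norm_mul₃_le
        _ ≤ 1 / 4 * 4 * (1 / 4) := by rw [norm_star]; gcongr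
        _ = 1 / 4 := by norm_num
    rw [star_mul_rangeComplement_mul, ← sub_add]
    rw [norm_sub_rev] at hyl
    linarith [norm_add_le (l - star y * y)
      (star y * v * Ring.inverse (star v * v) * star (star y * v))]

end AlmostIsometry

section Projection

open scoped CStarAlgebra

theorem isProjection_iff_isStarProjection {B : Type*} [NonUnitalNormedRing B] [StarRing B] {p : B} :
    IsProjection p ↔ IsStarProjection p :=
  ⟨fun h => ⟨h.2, h.1⟩, fun h => ⟨h.isSelfAdjoint, h.isIdempotentElem⟩⟩

theorem IsProjection.mem_herSub {B : Type*} [NonUnitalNormedRing B] [StarRing B]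
    {a m p : B} (hp : IsProjection p) (hm : IsSelfAdjoint (a * m * a))
    (hpm : p * (a * m * a) = p) : p ∈ herSub Set.univ a := by
  refine subset_closure ⟨m * a * p * (a * m), trivial, ?_⟩
  have hmp : a * m * a * p = p := by simpa [hm.star_eq, hp.1] using congrArg star hpm
  calc p = a * m * a * p * (a * m * a) := by rw [hmp, hpm]
    _ = a * (m * a * p * (a * m)) * a := by simp only [mul_assoc]

variable {B : Type*} [NonUnitalCStarAlgebra B]

theorem exists_isProjection_mul_eq_norm_sub_le {f l x y : B} (hf : IsSelfAdjoint f) (hf1 : ‖f‖ ≤ 1)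
    (hff : ‖f - f * f‖ ≤ 1 / 4) (hfl : f * l = f) (hfx : f * x = x) (hfy : f * y = y)
    (hxl : ‖star x * x - l‖ ≤ 1 / 4) (hyl : ‖star y * y - l‖ ≤ 1 / 4)
    (hyx : ‖star y * x‖ ≤ 1 / 4) :
    ∃ p : B, IsProjection p ∧ p * l = p ∧ ‖l - star y * p * y‖ ≤ 1 / 2 := by
  have hmul {b c d : B} (h : b * c = d) : (b : B⁺¹) * c = d := by rw [← Unitization.inr_mul, h]
  rw [← Unitization.norm_inr (𝕜 := ℂ)] at hf1 hff hxl hyl hyx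
  push_cast at hff hxl hyl hyx
  obtain ⟨P, hP, hPl, hle⟩ := exists_isStarProjection_mul_eq_norm_sub_le
    ((Unitization.isSelfAdjoint_inr (R := ℂ)).2 hf) hf1 hff (hmul hfl) (hmul hfx) (hmul hfy)
    hxl hyl hyx
  obtain ⟨p, rfl⟩ := exists_inr_eq_of_fst_eq_zero (x := P) (by rw [← hPl]; simp)
  have hp : IsStarProjection p :=
    ⟨Unitization.inr_injective (R := ℂ) (by simpa using hP.isIdempotentElem.eq),
      Unitization.isSelfAdjoint_inr.1 hP.isSelfAdjoint⟩
  refine ⟨p, isProjection_iff_isStarProjection.2 hp,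
    Unitization.inr_injective (R := ℂ) (by simpa using hPl), ?_⟩
  rw [← Unitization.norm_inr (𝕜 := ℂ)]
  simpa using hle

variable [PartialOrder B] [StarOrderedRing B]

-- Proper infiniteness provides two almost orthogonal copies `x`, `y` of `l` inside `s * s`.
theorem ProperlyInfinite.exists_isProjection {s f l : B} (hpi : ProperlyInfinite (s * s))
    (hfull : IsFullIn (s * s)) (hs : IsSelfAdjoint s) (hf : IsSelfAdjoint f) (hl : 0 ≤ l)
    (hf1 : ‖f‖ ≤ 1) (hff : ‖f - f * f‖ ≤ 1 / 4) (hfs : f * s = s) (hfl : f * l = f) :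
    ∃ p : B, IsProjection p ∧ p * l = p ∧ CuntzSubequiv (s * s) p := by
  have hls := hpi.cuntzSubequiv_of_isFullIn hfull hl
  obtain ⟨u, w, hu, hw, -, hwu⟩ := (hpi.diagonal_cuntzSubequiv hls hls).exists_tendsto_of_diagonal
  have close {v : ℕ → B} {c : B} (hv : Tendsto v atTop (𝓝 c)) : ∀ᶠ n in atTop, ‖v n - c‖ ≤ 1 / 4 :=
    (tendsto_iff_norm_sub_tendsto_zero.1 hv).eventually_le_const (by norm_num)
  obtain ⟨n, hun, hwn, hwun⟩ := ((close hu).and ((close hw).and (close hwu))).exists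
  have hconj (v z : B) : star (s * star v) * (s * star z) = v * (s * s) * star z := by
    simp only [star_mul, star_star, hs.star_eq, mul_assoc]
  have hfix (v : B) : f * (s * star v) = s * star v := by rw [← mul_assoc, hfs]
  obtain ⟨p, hp, hpl, hle⟩ := exists_isProjection_mul_eq_norm_sub_le hf hf1 hff hfl
    (hfix (u n)) (hfix (w n)) (by rwa [hconj]) (by rwa [hconj]) (by rwa [hconj, ← sub_zero (_ * _)])
  have hlsa : IsSelfAdjoint l := .of_nonneg hl
  have hsl : l * s = s := by
    have hlf : l * f = f := by simpa [hf.star_eq, hlsa.star_eq] using congrArg star hfl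
    rw [← hfs, ← mul_assoc, hlf]
  refine ⟨p, hp, hpl, ?_⟩
  refine (mul_self_cuntzSubequiv_of_norm_sub_lt_one hs (IsSelfAdjoint.conjugate' hp.1 _) hlsa hsl
    (hle.trans_lt (by norm_num))).trans ?_
  simpa only [star_star] using cuntzSubequiv_conj (star (s * star (w n))) p

end Projection

section Ramp

/-- The continuous cutoff function with value `0` on `(-∞, c]` and `1` on `[d, ∞)`, for `c < d`,
used in the functional calculus to cut off an element at the levels `c` and `d`. -/
noncomputable def ramp (c d t : ℝ) : ℝ := Real.smoothTransition ((t - c) / (d - c))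

variable {c d e t : ℝ}

theorem continuous_ramp (c d : ℝ) : Continuous (ramp c d) :=
  Real.smoothTransition.continuous.comp (by fun_prop)

theorem ramp_nonneg (c d t : ℝ) : 0 ≤ ramp c d t :=
  Real.smoothTransition.nonneg _

theorem ramp_le_one (c d t : ℝ) : ramp c d t ≤ 1 :=
  Real.smoothTransition.le_one _

theorem ramp_of_le (hcd : c < d) (ht : t ≤ c) : ramp c d t = 0 :=
  Real.smoothTransition.zero_of_nonpos
    (div_nonpos_of_nonpos_of_nonneg (sub_nonpos.2 ht) (sub_pos.2 hcd).le)

theorem ramp_of_ge (hcd : c < d) (ht : d ≤ t) : ramp c d t = 1 :=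
  Real.smoothTransition.one_of_one_le ((one_le_div (sub_pos.2 hcd)).2 (sub_le_sub_right ht c))

theorem ramp_mul_ramp (hcd : c < d) (hde : d < e) (t : ℝ) :
    ramp d e t * ramp c d t = ramp d e t := by
  rcases le_total t d with ht | ht
  · rw [ramp_of_le hde ht, zero_mul]
  · rw [ramp_of_ge hcd ht, mul_one]

variable {B : Type*} [NonUnitalCStarAlgebra B] {a : B}

theorem cfcₙ_ramp_mul_cfcₙ_ramp (a : B) (hc : 0 ≤ c) (hcd : c < d) (hde : d < e) :
    cfcₙ (ramp d e) a * cfcₙ (ramp c d) a = cfcₙ (ramp d e) a := by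
  rw [← cfcₙ_mul _ _ a (continuous_ramp d e).continuousOn (ramp_of_le hde (hc.trans hcd.le))
    (continuous_ramp c d).continuousOn (ramp_of_le hcd hc)]
  exact cfcₙ_congr fun t _ => ramp_mul_ramp hcd hde t

theorem norm_cfcₙ_ramp_le_one (c d : ℝ) (a : B) : ‖cfcₙ (ramp c d) a‖ ≤ 1 :=
  norm_cfcₙ_le fun t _ => by
    rw [Real.norm_of_nonneg (ramp_nonneg c d t)]
    exact ramp_le_one c d t

theorem norm_cfcₙ_ramp_sub_mul_self_le (hc : 0 ≤ c) (hcd : c < d) (a : B) :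
    ‖cfcₙ (ramp c d) a - cfcₙ (ramp c d) a * cfcₙ (ramp c d) a‖ ≤ 1 / 4 := by
  have hcont := (continuous_ramp c d).continuousOn (s := quasispectrum ℝ a)
  have h0 : ramp c d 0 = 0 := ramp_of_le hcd hc
  rw [← cfcₙ_mul _ _ a hcont h0 hcont h0,
    ← cfcₙ_sub _ (fun t => ramp c d t * ramp c d t) a hcont h0 (hcont.mul hcont) (by simp [h0])]
  refine norm_cfcₙ_le fun t _ => ?_
  rw [Real.norm_of_nonneg (sub_nonneg.2 (mul_le_of_le_one_left (ramp_nonneg c d t)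
    (ramp_le_one c d t)))]
  nlinarith [sq_nonneg (ramp c d t - 1 / 2)]

theorem exists_mul_mul_eq_cfcₙ_ramp (ha : IsSelfAdjoint a) (hc : 0 < c) (hcd : c < d) :
    ∃ m, a * m * a = cfcₙ (ramp c d) a := by
  -- The maximum keeps the denominator away from `0` without changing the quotient.
  set K : ℝ → ℝ := fun t => ramp c d t / (max t c * max t c)
  have hpos (t : ℝ) : 0 < max t c := lt_max_of_lt_right hc
  have hK : Continuous K :=
    (continuous_ramp c d).div (by fun_prop) fun t => (mul_pos (hpos t) (hpos t)).ne'
  have hK0 : K 0 = 0 := by simp only [K, ramp_of_le hcd hc.le, zero_div]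
  have htK (t : ℝ) : t * K t * t = ramp c d t := by
    rcases le_total t c with ht | ht
    · simp only [K, ramp_of_le hcd ht, zero_div, mul_zero, zero_mul]
    · have : 0 < t := hc.trans_le ht
      simp only [K, max_eq_left ht]
      field_simp
  refine ⟨cfcₙ K a, ?_⟩
  calc a * cfcₙ K a * a = cfcₙ (fun t => t) a * cfcₙ K a * cfcₙ (fun t => t) a := by
        rw [cfcₙ_id' ℝ a]
    _ = cfcₙ (ramp c d) a := by
        rw [← cfcₙ_mul _ _ a, ← cfcₙ_mul _ _ a]
        exact cfcₙ_congr fun t _ => htK t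

theorem cfcₙ_mem_of_isSelfAdjoint {A : NonUnitalSubalgebra ℝ B} (hA : IsClosed (A : Set B))
    (haA : a ∈ A) (ha : IsSelfAdjoint a) (f : ℝ → ℝ) : cfcₙ f a ∈ A := by
  let T : NonUnitalStarSubalgebra ℝ B := (A ⊓ star A).toNonUnitalStarSubalgebra fun x hx =>
    ⟨hx.2, by simpa using hx.1⟩
  have hT : IsClosed (T : Set B) := hA.inter (hA.preimage continuous_star)
  exact (cfcₙ_mem (𝕜' := ℝ) (hs := hT) f (s := T) ⟨haA, by simpa [ha.star_eq] using haA⟩).1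

variable [PartialOrder B] [StarOrderedRing B]

open scoped CStarAlgebra in
theorem norm_mem_quasispectrum_of_nonneg (ha : 0 ≤ a) : ‖a‖ ∈ quasispectrum ℝ a := by
  rw [Unitization.quasispectrum_eq_spectrum_inr' ℝ ℂ, ← Unitization.norm_inr (𝕜 := ℂ)]
  exact CStarAlgebra.norm_mem_spectrum_of_nonneg (Unitization.inr_nonneg_iff.2 ha)

theorem cfcₙ_ramp_ne_zero (ha : 0 ≤ a) (hc : 0 ≤ c) (hcd : c < d) (hd : d ≤ ‖a‖) :
    cfcₙ (ramp c d) a ≠ 0 := by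
  intro h
  have hle := norm_apply_le_norm_cfcₙ (ramp c d) a (norm_mem_quasispectrum_of_nonneg ha)
    (continuous_ramp c d).continuousOn (ramp_of_le hcd hc) (.of_nonneg ha)
  rw [h, ramp_of_ge hcd hd] at hle
  norm_num at hle

end Ramp

section Inclusion

variable {B : Type*} [NonUnitalCStarAlgebra B] [PartialOrder B] [StarOrderedRing B] {a : B}

theorem exists_mem_herSub_isProjection {b c d e : ℝ} (ha : 0 ≤ a) (hb : 0 < b) (hbc : b < c)
    (hcd : c < d) (hde : d < e) (hfull : IsFullIn (cfcₙ (ramp d e) a * cfcₙ (ramp d e) a))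
    (hpi : ProperlyInfinite (cfcₙ (ramp d e) a * cfcₙ (ramp d e) a)) :
    ∃ p ∈ herSub Set.univ a, IsProjection p ∧ IsFullIn p ∧ ProperlyInfinite p := by
  have hc := hb.trans hbc
  have hsa (x y : ℝ) : IsSelfAdjoint (cfcₙ (ramp x y) a) := cfcₙ_predicate _ a
  have hfs : cfcₙ (ramp c d) a * cfcₙ (ramp d e) a = cfcₙ (ramp d e) a := by
    simpa [(hsa _ _).star_eq] using congrArg star (cfcₙ_ramp_mul_cfcₙ_ramp a hc.le hcd hde)
  obtain ⟨p, hp, hpl, hsp⟩ := hpi.exists_isProjection hfull (hsa d e) (hsa c d)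
    (cfcₙ_nonneg fun t _ => ramp_nonneg b c t) (norm_cfcₙ_ramp_le_one c d a)
    (norm_cfcₙ_ramp_sub_mul_self_le hc.le hcd a) hfs (cfcₙ_ramp_mul_cfcₙ_ramp a hb.le hbc hcd)
  obtain ⟨m, hm⟩ := exists_mul_mul_eq_cfcₙ_ramp (.of_nonneg ha) hb hbc
  rw [← hm] at hpl
  exact ⟨p, hp.mem_herSub (hm ▸ hsa b c) hpl, hp, hfull.of_cuntzSubequiv hsp,
    hpi.of_cuntzSubequiv hfull (isProjection_iff_isStarProjection.1 hp).nonneg hsp⟩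

theorem IsProjection.cuntzSubequiv_of_mem_herSub {p : B} (hp : IsProjection p) (ha : 0 ≤ a)
    (hpa : p ∈ herSub Set.univ a) : CuntzSubequiv p a := by
  simpa only [hp.1, hp.2] using mul_star_self_cuntzSubequiv_of_mem_herSub ha hpa

theorem stmt19_general (A : NonUnitalSubalgebra ℝ B) (hAc : IsClosed (A : Set B)) :
    (∀ a ∈ A, 0 ≤ a → a ≠ 0 → IsFullIn a ∧ ProperlyInfinite a) ↔
      (∀ a ∈ A, 0 ≤ a → a ≠ 0 →
        ∃ p ∈ herSub (Set.univ : Set B) a,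
          IsProjection p ∧ IsFullIn p ∧ ProperlyInfinite p) := by
  constructor
  · intro h a haA ha ha0
    obtain ⟨r, hr, hra⟩ : ∃ r : ℝ, 0 < r ∧ 4 * r = ‖a‖ :=
      ⟨‖a‖ / 4, by positivity, by ring⟩
    set s := cfcₙ (ramp (3 * r) (4 * r)) a
    have hsA : s ∈ A := cfcₙ_mem_of_isSelfAdjoint hAc haA (.of_nonneg ha) _
    have hs : IsSelfAdjoint s := cfcₙ_predicate _ a
    have hs0 : s ≠ 0 := cfcₙ_ramp_ne_zero ha (by positivity) (by linarith) hra.le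
    have hss0 : s * s ≠ 0 := by
      simpa only [hs.star_eq] using (CStarRing.star_mul_self_ne_zero_iff s).2 hs0
    obtain ⟨hfull, hpi⟩ := h (s * s) (mul_mem hsA hsA) hs.mul_self_nonneg hss0
    exact exists_mem_herSub_isProjection (b := r) (c := 2 * r) ha hr (by linarith) (by linarith)
      (by linarith) hfull hpi
  · intro h a haA ha ha0
    obtain ⟨p, hpa, hp, hfull, hpi⟩ := h a haA ha ha0
    have hpa' := hp.cuntzSubequiv_of_mem_herSub ha hpa
    exact ⟨hfull.of_cuntzSubequiv hpa', hpi.of_cuntzSubequiv hfull ha hpa'⟩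

end Inclusion

theorem stmt19 {B : Type*} [NonUnitalCStarAlgebra B] [PartialOrder B] [StarOrderedRing B]
    (A : NonUnitalStarSubalgebra ℂ B) (hAc : IsClosed (A : Set B)) :
    (∀ a ∈ A, 0 ≤ a → a ≠ 0 → IsFullIn a ∧ ProperlyInfinite a) ↔
      (∀ a ∈ A, 0 ≤ a → a ≠ 0 →
        ∃ p ∈ herSub (Set.univ : Set B) a,
          IsProjection p ∧ IsFullIn p ∧ ProperlyInfinite p) :=
  have := SMulMemClass.ofIsScalarTower (NonUnitalStarSubalgebra ℂ B) ℝ ℂ B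
  stmt19_general (.ofClass A) hAc
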